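/- Let I ⊆ ℝ be a nonempty open interval, p ∈ I, and n, k ∈ ℕ∪{0} with 0 ≤ k < n and n−k odd. Then the function φ_{p,n}(u) = (u−p)^n is neither k-increasing nor k-decreasing on I. -/

import Mathlib

open MeasureTheory Set

/-- Integral of `f` over the set `A` with respect to the (automatically bounded) signed
Borel measure `μ`, defined via the Jordan decomposition. -/
noncomputable def sInt (μ : MeasureTheory.SignedMeasure ℝ) (A : Set ℝ) (f : ℝ → ℝ) : ℝ :=
  (∫ t in A, f t ∂μ.toJordanDecomposition.posPart) -
  (∫ t in A, f t ∂μ.toJordanDecomposition.negPart)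

/-- `μ_k(τ) = ∫_{[0,1]} (t-τ)^k dμ(t)` (with the convention `0^0 = 1`). -/
noncomputable def muK (μ : MeasureTheory.SignedMeasure ℝ) (k : ℕ) (τ : ℝ) : ℝ :=
  sInt μ (Icc 0 1) (fun t => (t - τ) ^ k)

/-- `μ_k^-(τ) = ∫_{[0,τ)} (t-τ)^k dμ(t)`. -/
noncomputable def muMinus (μ : MeasureTheory.SignedMeasure ℝ) (k : ℕ) (τ : ℝ) : ℝ :=
  sInt μ (Ico 0 τ) (fun t => (t - τ) ^ k)

/-- `μ_k^+(τ) = ∫_{(τ,1]} (t-τ)^k dμ(t)`. -/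
noncomputable def muPlus (μ : MeasureTheory.SignedMeasure ℝ) (k : ℕ) (τ : ℝ) : ℝ :=
  sInt μ (Ioc τ 1) (fun t => (t - τ) ^ k)

/-- The `n`th-order divided difference of `f` at the points `x 0, …, x n`. -/
noncomputable def divDiff (f : ℝ → ℝ) (n : ℕ) (x : Fin (n + 1) → ℝ) : ℝ :=
  ∑ j : Fin (n + 1), f (x j) / ∏ i ∈ Finset.univ.erase j, (x j - x i)

/-- `f` is `n`-increasing on `I`: all `n`th-order divided differences at pairwise
distinct points of `I` are nonnegative. -/
def nIncreasingOn (f : ℝ → ℝ) (I : Set ℝ) (n : ℕ) : Prop :=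
  ∀ x : Fin (n + 1) → ℝ, Function.Injective x → (∀ j, x j ∈ I) → 0 ≤ divDiff f n x

/-- `f` is `n`-decreasing on `I` if `-f` is `n`-increasing on `I`. -/
def nDecreasingOn (f : ℝ → ℝ) (I : Set ℝ) (n : ℕ) : Prop :=
  nIncreasingOn (fun u => -f u) I n

/-- `φ⁺_{p,n}(u) = ((u-p)_+)^n` for `n ≥ 1`, and `φ⁺_{p,0}` is the characteristic
function of `(p,∞)`. -/
noncomputable def phiPlus (p : ℝ) (n : ℕ) (u : ℝ) : ℝ :=
  if n = 0 then (if p < u then 1 else 0) else (max 0 (u - p)) ^ n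

/-- `φ⁻_{p,n}(u) = ((u-p)_−)^n` for `n ≥ 1`, and `φ⁻_{p,0}` is the characteristic
function of `(−∞,p)`. -/
noncomputable def phiMinus (p : ℝ) (n : ℕ) (u : ℝ) : ℝ :=
  if n = 0 then (if u < p then 1 else 0) else (max 0 (p - u)) ^ n

/- The set `J(p)` associated with an interval `I` and a point `p ∈ ℝ`:
`(−∞, (p − inf I)/(sup I − inf I))` if `p ≤ inf I` (interpreted as `(−∞,0)` when `I` is
unbounded above), `ℝ` if `p ∈ I`, and `(1 + (p − sup I)/(sup I − inf I), ∞)` if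
`p ≥ sup I` (interpreted as `(1,∞)` when `I` is unbounded below). -/
open scoped Classical in
noncomputable def Jset (I : Set ℝ) (p : ℝ) : Set ℝ :=
  if p ∈ I then Set.univ
  else if p ∈ lowerBounds I then
    (if BddAbove I then Set.Iio ((p - sInf I) / (sSup I - sInf I)) else Set.Iio 0)
  else
    (if BddBelow I then Set.Ioi (1 + (p - sSup I) / (sSup I - sInf I)) else Set.Ioi 1)

/-! Reflecting the nodes in `p` multiplies the `k`-th divided difference of `(u - p) ^ n` by
`(-1) ^ (n - k) = -1`. If all these differences had one sign on `I`, they would therefore vanish at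
all nodes of the part of `I` symmetric about `p`. Vanishing `k`-th divided differences force a
function to agree there with a polynomial of degree less than `k`, which `(u - p) ^ n` cannot do at
more than `n` points, since `k < n`. -/

open Polynomial

theorem divDiff_const_mul (a : ℝ) (f : ℝ → ℝ) (k : ℕ) (x : Fin (k + 1) → ℝ) :
    divDiff (fun u => a * f u) k x = a * divDiff f k x := by
  simp only [divDiff, Finset.mul_sum, mul_div_assoc]

theorem divDiff_const_sub (f : ℝ → ℝ) (c : ℝ) (k : ℕ) (x : Fin (k + 1) → ℝ) :
    divDiff f k (fun j => c - x j) = (-1) ^ k * divDiff (fun u => f (c - u)) k x := by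
  have hprod (j : Fin (k + 1)) : ∏ i ∈ Finset.univ.erase j, ((c - x j) - (c - x i)) =
      (-1) ^ k * ∏ i ∈ Finset.univ.erase j, (x j - x i) := by
    simp_rw [sub_sub_sub_cancel_left, ← neg_sub (x j), Finset.prod_neg]
    simp
  rw [divDiff, divDiff, Finset.mul_sum]
  refine Finset.sum_congr rfl fun j _ => ?_
  rw [hprod]
  rcases neg_one_pow_eq_or ℝ k with hsign | hsign <;> rw [hsign] <;> ring

section Interpolation

variable {f : ℝ → ℝ} {I : Set ℝ} {k : ℕ}

theorem divDiff_eq_coeff_interpolate {x : Fin (k + 1) → ℝ} (hx : Function.Injective x) :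
    divDiff f k x = (Lagrange.interpolate Finset.univ x (f ∘ x)).coeff k := by
  have hcoeff := Lagrange.coeff_eq_sum hx.injOn
    (Lagrange.degree_interpolate_lt (s := Finset.univ) (f ∘ x) hx.injOn)
  simp only [Finset.card_univ, Fintype.card_fin, Nat.add_sub_cancel] at hcoeff
  rw [hcoeff, divDiff]
  exact Finset.sum_congr rfl fun j hj => by
    rw [Lagrange.eval_interpolate_at_node _ hx.injOn hj, Function.comp_apply]

theorem exists_degree_lt_of_divDiff_eq_zero {x : Fin (k + 1) → ℝ}
    (hx : Function.Injective x) (hzero : divDiff f k x = 0) :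
    ∃ Q : ℝ[X], Q.degree < k ∧ ∀ j, Q.eval (x j) = f (x j) := by
  refine ⟨Lagrange.interpolate Finset.univ x (f ∘ x), ?_, fun j =>
    Lagrange.eval_interpolate_at_node _ hx.injOn (Finset.mem_univ j)⟩
  rw [divDiff_eq_coeff_interpolate hx] at hzero
  have hdeg := Lagrange.degree_interpolate_lt (s := Finset.univ) (f ∘ x) hx.injOn
  rw [Finset.card_univ, Fintype.card_fin, degree_lt_iff_coeff_zero] at hdeg
  refine (degree_lt_iff_coeff_zero _ _).2 fun m hm => ?_
  rcases hm.eq_or_lt with rfl | hlt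
  · exact hzero
  · exact hdeg m hlt

theorem exists_degree_lt_of_forall_divDiff_eq_zero {s : Finset ℝ} (hk : k ≤ s.card)
    (hzero : ∀ x : Fin (k + 1) → ℝ, Function.Injective x → (∀ j, x j ∈ s) → divDiff f k x = 0) :
    ∃ Q : ℝ[X], Q.degree < k ∧ ∀ z ∈ s, Q.eval z = f z := by
  obtain ⟨t, hts, rfl⟩ := Finset.exists_subset_card_eq hk
  set Q := Lagrange.interpolate t id f
  have hQdeg : Q.degree < t.card := Lagrange.degree_interpolate_lt f Function.injective_id.injOn
  have hQt : ∀ y ∈ t, Q.eval y = f y := fun y hy =>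
    Lagrange.eval_interpolate_at_node f Function.injective_id.injOn hy
  refine ⟨Q, hQdeg, fun z hz => ?_⟩
  by_cases hzt : z ∈ t
  · exact hQt z hzt
  -- An interpolant of degree `< k` at the `k + 1` nodes `insert z t` must be `Q`.
  let x := (insert z t).orderEmbOfFin (Finset.card_insert_of_notMem hzt)
  have hxs (j) : x j ∈ s := Finset.insert_subset hz hts (Finset.orderEmbOfFin_mem _ _ j)
  obtain ⟨R, hRdeg, hRx⟩ := exists_degree_lt_of_divDiff_eq_zero x.injective
    (hzero x x.injective hxs)
  have hR : ∀ y ∈ insert z t, R.eval y = f y := by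
    intro y hy
    rw [← Finset.mem_coe, ← Finset.range_orderEmbOfFin _ (Finset.card_insert_of_notMem hzt)] at hy
    obtain ⟨j, rfl⟩ := hy
    exact hRx j
  have hRQ : R = Q := eq_of_degrees_lt_of_eval_finset_eq t hRdeg hQdeg fun y hy =>
    (hR y (Finset.mem_insert_of_mem hy)).trans (hQt y hy).symm
  exact hRQ ▸ hR z (Finset.mem_insert_self z t)

theorem nIncreasingOn.divDiff_eq_zero_of_reflect (hf : nIncreasingOn f I k) {c : ℝ}
    (hreflect : ∀ u, f (c - u) = (-1) ^ (k + 1) * f u) {x : Fin (k + 1) → ℝ}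
    (hx : Function.Injective x) (hxI : ∀ j, x j ∈ I) (hcxI : ∀ j, c - x j ∈ I) :
    divDiff f k x = 0 := by
  have hneg : divDiff f k (fun j => c - x j) = -divDiff f k x := by
    simp_rw [divDiff_const_sub, hreflect, divDiff_const_mul, ← mul_assoc, ← pow_add]
    rw [Odd.neg_one_pow ⟨k, by ring⟩, neg_one_mul]
  have hnonneg := hf x hx hxI
  have hnonpos := hf _ (sub_right_injective.comp hx) hcxI
  rw [Function.comp_def, hneg] at hnonpos
  linarith

theorem not_nIncreasingOn_of_eval_eq_of_reflect {P : ℝ[X]} {c : ℝ} (hkP : k ≤ P.degree)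
    (hPf : ∀ u ∈ I, P.eval u = f u) (hreflect : ∀ u, f (c - u) = (-1) ^ (k + 1) * f u)
    (hI : P.natDegree < {u ∈ I | c - u ∈ I}.encard) :
    ¬ nIncreasingOn f I k := by
  intro hf
  obtain ⟨t, htI, htcard⟩ := Set.exists_subset_encard_eq (Order.add_one_le_of_lt hI)
  lift t to Finset ℝ using Set.finite_of_encard_eq_coe (k := P.natDegree + 1) (mod_cast htcard)
  have hPt : P.degree < t.card := by
    rw [Set.encard_coe_eq_coe_finsetCard] at htcard
    norm_cast at htcard
    rw [htcard]
    exact degree_le_natDegree.trans_lt (by exact_mod_cast P.natDegree.lt_succ_self)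
  have hkt : k ≤ t.card := by exact_mod_cast hkP.trans hPt.le
  obtain ⟨Q, hQdeg, hQf⟩ := exists_degree_lt_of_forall_divDiff_eq_zero hkt fun x hx hxt =>
    hf.divDiff_eq_zero_of_reflect hreflect hx (fun j => (htI (hxt j)).1) fun j => (htI (hxt j)).2
  have hQeq : Q = P :=
    eq_of_degrees_lt_of_eval_finset_eq t (hQdeg.trans_le (hkP.trans hPt.le)) hPt fun u hu =>
      (hQf u hu).trans (hPf u (htI hu).1).symm
  exact (hQeq ▸ hQdeg).not_ge hkP

end Interpolation

theorem infinite_setOf_mem_reflect_mem {I : Set ℝ} {p : ℝ} (hI : I ∈ nhds p) :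
    {u ∈ I | 2 * p - u ∈ I}.Infinite := by
  have hreflect : Filter.Tendsto (fun u => 2 * p - u) (nhds p) (nhds p) :=
    Continuous.tendsto' (by fun_prop) _ _ (by ring)
  exact infinite_of_mem_nhds p (Filter.inter_mem hI (hreflect hI))

theorem stmt10_general {I : Set ℝ} {p : ℝ} {n k : ℕ} (hI : n < {u ∈ I | 2 * p - u ∈ I}.encard)
    (hpar : Odd (n - k)) :
    ¬ nIncreasingOn (fun u => (u - p) ^ n) I k ∧
      ¬ nDecreasingOn (fun u => (u - p) ^ n) I k := by
  have hkn : k < n := Nat.lt_of_sub_pos hpar.pos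
  have hsign : (-1 : ℝ) ^ n = (-1) ^ (k + 1) := by
    rw [← Nat.add_sub_cancel' hkn.le, pow_add, hpar.neg_one_pow, pow_succ]
  have hreflect (u : ℝ) : (2 * p - u - p) ^ n = (-1) ^ (k + 1) * (u - p) ^ n := by
    rw [← hsign, ← mul_pow]
    ring
  constructor
  · exact not_nIncreasingOn_of_eval_eq_of_reflect (P := (X - C p) ^ n)
      (by simpa using hkn.le) (by simp) hreflect (by simpa using hI)
  · exact not_nIncreasingOn_of_eval_eq_of_reflect (P := -(X - C p) ^ n)
      (by simpa using hkn.le) (by simp) (by simpa using hreflect) (by simpa using hI)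

theorem stmt10 (I : Set ℝ) (hIo : IsOpen I) (hIc : I.OrdConnected) (hIne : I.Nonempty)
    (p : ℝ) (hp : p ∈ I) (n k : ℕ) (hkn : k < n) (hpar : Odd (n - k)) :
    ¬ nIncreasingOn (fun u => (u - p) ^ n) I k ∧
      ¬ nDecreasingOn (fun u => (u - p) ^ n) I k := by
  have hinf := infinite_setOf_mem_reflect_mem (hIo.mem_nhds hp)
  exact stmt10_general (hinf.encard_eq ▸ ENat.natCast_lt_top n) hpar
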